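/- Let α = β with α > −1 and α ≠ −1/2, and let n ≥ 0 be an integer. Then for 0 ≤ k ≤ n: if n − k is even, d_{k,n} = 2^{2α} Γ(n+α+1) Γ((k+n+1)/2 + α) Γ((n−k+1)/2 + α) / (√π Γ(n+2α+1) Γ((k+n)/2 + 1) Γ((n−k)/2 + 1) Γ(α + 1/2)); and if n − k is odd, d_{k,n} = 0. -/

import Mathlib

open Finset

/-- Pochhammer symbol `(a)_j = a (a+1) ⋯ (a+j-1)`. -/
noncomputable def poch (a : ℝ) (j : ℕ) : ℝ := ∏ i ∈ Finset.range j, (a + i)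

/-- Generalized binomial coefficient `binom(a, m) = a (a-1) ⋯ (a-m+1) / m!`. -/
noncomputable def gbinom (a : ℝ) (m : ℕ) : ℝ :=
  (∏ i ∈ Finset.range m, (a - i)) / (Nat.factorial m)

/-- Jacobi polynomial `P_n^{(α,β)}(x)` of a real variable. -/
noncomputable def jacobiP (α β : ℝ) (n : ℕ) (x : ℝ) : ℝ :=
  (1 / 2 ^ n) * ∑ k ∈ Finset.range (n + 1),
    gbinom ((n : ℝ) + α) (n - k) * gbinom ((n : ℝ) + β) k * (x - 1) ^ k * (x + 1) ^ (n - k)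

/-- Jacobi polynomial `P_n^{(α,β)}(z)` of a complex variable. -/
noncomputable def jacobiC (α β : ℝ) (n : ℕ) (z : ℂ) : ℂ :=
  (1 / 2 ^ n) * ∑ k ∈ Finset.range (n + 1),
    ((gbinom ((n : ℝ) + α) (n - k) * gbinom ((n : ℝ) + β) k : ℝ) : ℂ) *
      (z - 1) ^ k * (z + 1) ^ (n - k)

/-- Chebyshev-connection coefficients `d_{k,n}`, given by a terminating ₃F₂ sum. -/
noncomputable def dCoeff (α β : ℝ) (n k : ℕ) : ℝ :=
  (poch ((n : ℝ) + α + β + 1) k * poch ((k : ℝ) + α + 1) (n - k)) /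
      ((Nat.factorial (n - k)) * 2 ^ (2 * k) * (Nat.factorial k)) *
    ∑ j ∈ Finset.range (n - k + 1),
      (poch ((k : ℝ) - n) j * poch ((n : ℝ) + k + α + β + 1) j * poch ((k : ℝ) + 1 / 2) j) /
        (poch ((k : ℝ) + α + 1) j * poch (2 * (k : ℝ) + 1) j * (Nat.factorial j))

/-- The Bernstein ellipse `E_ρ`: the set of points `z = (u + u⁻¹)/2` with `|u| = ρ`. -/
def bernsteinEllipse (ρ : ℝ) : Set ℂ :=
  {z : ℂ | ∃ u : ℂ, ‖u‖ = ρ ∧ z = (u + u⁻¹) / 2}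


lemma poch_zero' (a : ℝ) : poch a 0 = 1 := by simp [poch]

lemma poch_succ' (a : ℝ) (j : ℕ) : poch a (j + 1) = poch a j * (a + j) := by
  simp [poch, Finset.prod_range_succ]

lemma poch_shift (a : ℝ) (j : ℕ) : a * poch (a + 1) j = poch a j * (a + j) := by
  induction j with
  | zero => simp [poch_zero']
  | succ j ih =>
    rw [poch_succ', poch_succ', ← mul_assoc, ih]; push_cast; ring

lemma poch_shift_two (a : ℝ) (j : ℕ) :
    a * (a + 1) * poch (a + 2) j = poch a j * (a + j) * (a + j + 1) := by
  have h1 := poch_shift a j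
  have h2 := poch_shift (a + 1) j
  have e : a + 1 + 1 = a + 2 := by ring
  rw [e] at h2
  calc a * (a + 1) * poch (a + 2) j = a * ((a + 1) * poch (a + 2) j) := by ring
    _ = (a * poch (a + 1) j) * (a + 1 + j) := by rw [h2]; ring
    _ = _ := by rw [h1]; ring

lemma poch_pos (a : ℝ) (ha : 0 < a) (j : ℕ) : 0 < poch a j :=
  Finset.prod_pos fun i _ => by positivity

lemma poch_neg_nat (m j : ℕ) (h : m < j) : poch (-(m : ℝ)) j = 0 :=
  Finset.prod_eq_zero (Finset.mem_range.mpr h) (by simp)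

lemma poch_Gamma (a : ℝ) (j : ℕ) (h : ∀ i : ℕ, a + i ≠ 0) :
    Real.Gamma (a + j) = poch a j * Real.Gamma a := by
  induction j with
  | zero => simp [poch_zero']
  | succ j ih =>
    rw [poch_succ']; push_cast
    rw [← add_assoc, Real.Gamma_add_one (h j), ih]; ring

/-- Summand of the Watson sum. -/
noncomputable def wF (α : ℝ) (k m j : ℕ) : ℝ :=
  (poch (-(m : ℝ)) j * poch ((m : ℝ) + 2 * k + 2 * α + 1) j * poch ((k : ℝ) + 1 / 2) j) /
        (poch ((k : ℝ) + α + 1) j * poch (2 * (k : ℝ) + 1) j * (Nat.factorial j))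

noncomputable def wS (α : ℝ) (k m : ℕ) : ℝ := ∑ j ∈ Finset.range (m + 1), wF α k m j

/-- Common base term. -/
noncomputable def wT (α : ℝ) (k m j : ℕ) : ℝ :=
  (poch (-(m : ℝ) - 2) j * poch ((m : ℝ) + 2 * k + 2 * α + 1) j * poch ((k : ℝ) + 1 / 2) j) /
        (poch ((k : ℝ) + α + 1) j * poch (2 * (k : ℝ) + 1) j * (Nat.factorial j))

noncomputable def wC (α : ℝ) (k m : ℕ) : ℝ :=
  -2 * (2 * m + 2 * k + 2 * α + 3) / ((m + 2 * k + 2 * α + 1) * (m + 2 * k + 2 * α + 2)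
    * (m + 2) * (2 * k + m + 2))

noncomputable def wG (α : ℝ) (k m j : ℕ) : ℝ :=
  wC α k m * (j * (k + α + j) * (2 * k + j)) * wT α k m j

noncomputable def wr (α : ℝ) (k m : ℕ) : ℝ :=
  (m + 1) * (m + 2 * α + 1) / ((m + 2 * k + 2) * (m + 2 * k + 2 * α + 2))

lemma wB_ne (α : ℝ) (hα : -1 < α) (hα' : α ≠ -1/2) (x : ℕ) :
    (x : ℝ) + 2 * α + 1 ≠ 0 := by
  rcases Nat.eq_zero_or_pos x with rfl | h
  · intro h; apply hα'; push_cast at h; linarith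
  · have : (1 : ℝ) ≤ x := by exact_mod_cast h
    intro h; linarith

lemma wF_zero_eq (α : ℝ) (k m j : ℕ) :
    wF α k m j = wT α k m j * (((j : ℝ) - m - 2) * (j - m - 1) / ((m + 1) * (m + 2))) := by
  have h := poch_shift_two (-(m : ℝ) - 2) j
  have e : -(m : ℝ) - 2 + 2 = -m := by ring
  rw [e] at h
  have h1 : (m : ℝ) + 1 ≠ 0 := by positivity
  have h2 : (m : ℝ) + 2 ≠ 0 := by positivity
  have h' : poch (-(m : ℝ)) j = poch (-(m : ℝ) - 2) j *
      (((j : ℝ) - m - 2) * (j - m - 1) / ((m + 1) * (m + 2))) := by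
    field_simp
    linear_combination h
  unfold wF wT
  rw [h']; ring

lemma wF_two_eq (α : ℝ) (hα : -1 < α) (hα' : α ≠ -1/2) (k m j : ℕ) :
    wF α k (m + 2) j = wT α k m j * (((m : ℝ) + 2 * k + 2 * α + 1 + j) *
      (m + 2 * k + 2 * α + 2 + j) / ((m + 2 * k + 2 * α + 1) * (m + 2 * k + 2 * α + 2))) := by
  have h := poch_shift_two ((m : ℝ) + 2 * k + 2 * α + 1) j
  have h1 : (m : ℝ) + 2 * k + 2 * α + 1 ≠ 0 := by
    have := wB_ne α hα hα' (m + 2 * k); push_cast at this; exact this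
  have h2 : (m : ℝ) + 2 * k + 2 * α + 2 ≠ 0 := by
    have : (0 : ℝ) ≤ m := by positivity
    have : (0 : ℝ) ≤ k := by positivity
    intro h; linarith
  have h' : poch ((m : ℝ) + 2 * k + 2 * α + 1 + 2) j = poch ((m : ℝ) + 2 * k + 2 * α + 1) j *
    (((m : ℝ) + 2 * k + 2 * α + 1 + j) *
      (m + 2 * k + 2 * α + 2 + j) / ((m + 2 * k + 2 * α + 1) * (m + 2 * k + 2 * α + 2))) := by
    field_simp
    linear_combination h
  unfold wF wT
  have e1 : -((m + 2 : ℕ) : ℝ) = -(m : ℝ) - 2 := by push_cast; ring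
  have e2 : ((m + 2 : ℕ) : ℝ) + 2 * k + 2 * α + 1 = (m : ℝ) + 2 * k + 2 * α + 1 + 2 := by
    push_cast; ring
  rw [e1, e2, h']; ring

lemma wT_succ (α : ℝ) (hα : -1 < α) (k m j : ℕ) :
    wT α k m (j + 1) * ((k + α + 1 + j) * (2 * k + 1 + j) * (j + 1)) =
      wT α k m j * (((j : ℝ) - m - 2) * (m + 2 * k + 2 * α + 1 + j) * (k + 1 / 2 + j)) := by
  have hk : (0 : ℝ) ≤ k := by positivity
  have hj : (0 : ℝ) ≤ j := by positivity
  have p1 := (poch_pos ((k : ℝ) + α + 1) (by linarith) j).ne'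
  have p2 := (poch_pos (2 * (k : ℝ) + 1) (by linarith) j).ne'
  have p3 : ((Nat.factorial j : ℕ) : ℝ) ≠ 0 := by exact_mod_cast Nat.factorial_ne_zero j
  have q1 : (k : ℝ) + α + 1 + j ≠ 0 := by intro h; linarith
  have q2 : 2 * (k : ℝ) + 1 + j ≠ 0 := by positivity
  have q3 : (j : ℝ) + 1 ≠ 0 := by positivity
  unfold wT
  simp only [poch_succ', Nat.factorial_succ]
  push_cast
  field_simp
  ring

lemma wG_step (α : ℝ) (hα : -1 < α) (hα' : α ≠ -1/2) (k m j : ℕ) :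
    wF α k (m + 2) j - wr α k m * wF α k m j = wG α k m (j + 1) - wG α k m j := by
  have hk : (0 : ℝ) ≤ k := by positivity
  have hm : (0 : ℝ) ≤ m := by positivity
  have h1 : (m : ℝ) + 2 * k + 2 * α + 1 ≠ 0 := by
    have := wB_ne α hα hα' (m + 2 * k); push_cast at this; exact this
  have h2 : (m : ℝ) + 2 * k + 2 * α + 2 ≠ 0 := by
    intro h; linarith
  have h3 : (m : ℝ) + 1 ≠ 0 := by positivity
  have h4 : (m : ℝ) + 2 ≠ 0 := by positivity
  have h5 : 2 * (k : ℝ) + m + 2 ≠ 0 := by positivity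
  have h6 : (m : ℝ) + 2 * k + 2 ≠ 0 := by positivity
  have hG : wG α k m (j + 1) = wC α k m * (wT α k m j *
      (((j : ℝ) - m - 2) * (m + 2 * k + 2 * α + 1 + j) * (k + 1 / 2 + j))) := by
    rw [← wT_succ α hα]; unfold wG; push_cast; ring
  rw [hG, wF_two_eq α hα hα', wF_zero_eq]
  unfold wG wr wC
  have key : (((m : ℝ) + 2 * k + 2 * α + 1 + j) *
      (m + 2 * k + 2 * α + 2 + j) / ((m + 2 * k + 2 * α + 1) * (m + 2 * k + 2 * α + 2))) -
      (m + 1) * (m + 2 * α + 1) / ((m + 2 * k + 2) * (m + 2 * k + 2 * α + 2)) *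
      (((j : ℝ) - m - 2) * (j - m - 1) / ((m + 1) * (m + 2))) =
      -2 * (2 * m + 2 * k + 2 * α + 3) / ((m + 2 * k + 2 * α + 1) * (m + 2 * k + 2 * α + 2)
    * (m + 2) * (2 * k + m + 2)) * ((((j : ℝ) - m - 2) * (m + 2 * k + 2 * α + 1 + j)
      * (k + 1 / 2 + j)) - (j * (k + α + j) * (2 * k + j))) := by
    rw [show 2 * (k : ℝ) + m + 2 = m + 2 * k + 2 by ring]
    field_simp
    ring
  linear_combination wT α k m j * key

lemma wF_eq_zero (α : ℝ) (k m j : ℕ) (h : m < j) : wF α k m j = 0 := by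
  simp [wF, poch_neg_nat m j h]

lemma wS_rec (α : ℝ) (hα : -1 < α) (hα' : α ≠ -1/2) (k m : ℕ) :
    wS α k (m + 2) = wr α k m * wS α k m := by
  have h : ∑ j ∈ Finset.range (m + 3), (wF α k (m + 2) j - wr α k m * wF α k m j)
      = wG α k m (m + 3) - wG α k m 0 := by
    rw [← Finset.sum_range_sub]
    exact Finset.sum_congr rfl fun j _ => wG_step α hα hα' k m j
  have h0 : wG α k m 0 = 0 := by simp [wG]
  have hz : wG α k m (m + 3) = 0 := by
    have := poch_neg_nat (m + 2) (m + 3) (by omega)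
    have e1 : -((m + 2 : ℕ) : ℝ) = -(m : ℝ) - 2 := by push_cast; ring
    rw [e1] at this
    simp [wG, wT, this]
  rw [h0, hz, Finset.sum_sub_distrib, ← Finset.mul_sum] at h
  have hs : ∑ j ∈ Finset.range (m + 3), wF α k m j = wS α k m := by
    unfold wS
    rw [Finset.sum_range_succ, Finset.sum_range_succ, wF_eq_zero _ _ _ (m + 2) (by omega),
      wF_eq_zero _ _ _ (m + 1) (by omega)]
    ring
  rw [hs] at h
  have : wS α k (m + 2) = ∑ j ∈ Finset.range (m + 3), wF α k (m + 2) j := rfl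
  rw [this]; linarith

lemma wS_odd (α : ℝ) (hα : -1 < α) (hα' : α ≠ -1/2) (k p : ℕ) :
    wS α k (2 * p + 1) = 0 := by
  induction p with
  | zero =>
    have hk : (0 : ℝ) ≤ k := by positivity
    have q1 : (k : ℝ) + α + 1 ≠ 0 := by intro h; linarith
    have q2 : 2 * (k : ℝ) + 1 ≠ 0 := by positivity
    simp [wS, wF, poch, Finset.sum_range_succ]
    field_simp
    ring
  | succ p ih =>
    have := wS_rec α hα hα' k (2 * p + 1)
    rw [ih, mul_zero] at this
    exact this

lemma wS_even (α : ℝ) (hα : -1 < α) (hα' : α ≠ -1/2) (k p : ℕ) :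
    wS α k (2 * p) = poch (1 / 2) p * poch (α + 1 / 2) p /
      (poch ((k : ℝ) + 1) p * poch ((k : ℝ) + α + 1) p) := by
  induction p with
  | zero => simp [wS, wF, poch]
  | succ p ih =>
    have := wS_rec α hα hα' k (2 * p)
    rw [ih] at this
    rw [show 2 * (p + 1) = 2 * p + 2 by ring, this]
    have hk : (0 : ℝ) ≤ k := by positivity
    have hp : (0 : ℝ) ≤ p := by positivity
    have p1 := (poch_pos ((k : ℝ) + α + 1) (by linarith) p).ne'
    have p2 := (poch_pos ((k : ℝ) + 1) (by linarith) p).ne'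
    have q1 : (k : ℝ) + α + 1 + p ≠ 0 := by intro h; linarith
    have q2 : (k : ℝ) + 1 + p ≠ 0 := by positivity
    simp only [poch_succ', wr]
    push_cast
    rw [show (2 * (p : ℝ) + 2 * k + 2) = 2 * (k + 1 + p) by ring,
      show (2 * (p : ℝ) + 2 * k + 2 * α + 2) = 2 * (k + α + 1 + p) by ring]
    field_simp
    ring

lemma dCoeff_eq (α : ℝ) (k m : ℕ) :
    dCoeff α α (k + m) k = (poch ((k : ℝ) + m + 2 * α + 1) k * poch ((k : ℝ) + α + 1) m) /
      ((Nat.factorial m) * 2 ^ (2 * k) * (Nat.factorial k)) * wS α k m := by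
  unfold dCoeff wS wF
  rw [Nat.add_sub_cancel_left]
  push_cast
  rw [show (k : ℝ) - (k + m) = -m by ring,
    show (k : ℝ) + m + α + α + 1 = (k : ℝ) + m + 2 * α + 1 by ring,
    show (k : ℝ) + m + k + α + α + 1 = (m : ℝ) + 2 * k + 2 * α + 1 by ring]

lemma poch_half (p : ℕ) :
    poch (1 / 2) p * (4 ^ p * Nat.factorial p) = (Nat.factorial (2 * p) : ℝ) := by
  induction p with
  | zero => simp [poch_zero']
  | succ p ih =>
    rw [show 2 * (p + 1) = 2 * p + 1 + 1 by ring, Nat.factorial_succ, Nat.factorial_succ,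
      poch_succ', Nat.factorial_succ]
    push_cast
    rw [← ih]; ring

lemma poch_fact (k p : ℕ) :
    poch ((k : ℝ) + 1) p * Nat.factorial k = (Nat.factorial (k + p) : ℝ) := by
  induction p with
  | zero => simp [poch_zero']
  | succ p ih =>
    rw [← add_assoc, Nat.factorial_succ, poch_succ']
    push_cast
    rw [← ih]; ring

lemma even_case (α : ℝ) (hα : -1 < α) (hα' : α ≠ -1/2) (k p : ℕ) :
    dCoeff α α (k + 2 * p) k =
        (2 : ℝ) ^ (2 * α) * Real.Gamma ((k : ℝ) + 2 * p + α + 1) *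
            Real.Gamma ((k : ℝ) + p + α + 1 / 2) * Real.Gamma (α + 1 / 2 + p) /
          (Real.sqrt Real.pi * Real.Gamma ((k : ℝ) + 2 * p + 2 * α + 1) *
            Real.Gamma (((k + p : ℕ) : ℝ) + 1) * Real.Gamma ((p : ℝ) + 1) *
            Real.Gamma (α + 1 / 2)) := by
  rw [dCoeff_eq, wS_even α hα hα', Real.Gamma_nat_eq_factorial, Real.Gamma_nat_eq_factorial]
  push_cast
  have hk : (0 : ℝ) ≤ k := by positivity
  have hp : (0 : ℝ) ≤ p := by positivity
  have g1 := poch_Gamma ((k : ℝ) + α + 1) (2 * p)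
    (fun i => by have : (0 : ℝ) ≤ i := by positivity
                 intro h; linarith)
  have g2 := poch_Gamma ((k : ℝ) + α + 1) p
    (fun i => by have : (0 : ℝ) ≤ i := by positivity
                 intro h; linarith)
  have hn : ∀ i : ℕ, (k : ℝ) + 2 * p + 2 * α + 1 + i ≠ 0 := fun i h => by
    have := wB_ne α hα hα' (k + 2 * p + i); push_cast at this; apply this; linarith
  have g3 := poch_Gamma ((k : ℝ) + 2 * p + 2 * α + 1) k hn
  have ha : ∀ i : ℕ, α + 1 / 2 + i ≠ 0 := fun i h => by
    have := wB_ne α hα hα' (2 * i); push_cast at this; apply this; linarith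
  have g4 := poch_Gamma (α + 1 / 2) p ha
  have d := Real.Gamma_mul_Gamma_add_half ((k : ℝ) + p + α + 1 / 2)
  rw [show (k : ℝ) + p + α + 1 / 2 + 1 / 2 = k + α + 1 + p by ring,
    show 2 * ((k : ℝ) + p + α + 1 / 2) = k + 2 * p + 2 * α + 1 + k by ring,
    show 1 - ((k : ℝ) + 2 * p + 2 * α + 1 + k) = -(2 * α + ((2 * k + 2 * p : ℕ) : ℝ)) by
      push_cast; ring,
    Real.rpow_neg (by norm_num), Real.rpow_add (by norm_num), Real.rpow_natCast, g2, g3] at d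
  push_cast at g1
  rw [show (k : ℝ) + α + 1 + 2 * p = k + 2 * p + α + 1 by ring] at g1
  have n1 : Real.Gamma ((k : ℝ) + α + 1) ≠ 0 := (Real.Gamma_pos_of_pos (by linarith)).ne'
  have n2 : Real.Gamma ((k : ℝ) + 2 * p + 2 * α + 1) ≠ 0 := by
    apply Real.Gamma_ne_zero
    intro i h; apply hn i; rw [h]; ring
  have n3 : Real.Gamma (α + 1 / 2) ≠ 0 := by
    apply Real.Gamma_ne_zero
    intro i h; apply ha i; rw [h]; ring
  have n4 : Real.sqrt Real.pi ≠ 0 := (Real.sqrt_pos.mpr Real.pi_pos).ne'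
  have n5 : (2 : ℝ) ^ (2 * α) ≠ 0 := (Real.rpow_pos_of_pos (by norm_num) _).ne'
  have p1 := (poch_pos ((k : ℝ) + α + 1) (by linarith) p).ne'
  have p2 := (poch_pos ((k : ℝ) + 1) (by linarith) p).ne'
  have p3 := (poch_pos (1 / 2) (by norm_num) p).ne'
  have f1 : ((Nat.factorial k : ℕ) : ℝ) ≠ 0 := by exact_mod_cast Nat.factorial_ne_zero k
  have f2 : ((Nat.factorial p : ℕ) : ℝ) ≠ 0 := by exact_mod_cast Nat.factorial_ne_zero p
  rw [g1, g4, ← poch_half, ← poch_fact]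
  have e4 : (2 : ℝ) ^ (2 * k + 2 * p) = 2 ^ (2 * k) * 4 ^ p := by
    rw [pow_add, pow_mul 2 2 p]; norm_num
  rw [e4] at d
  generalize Real.Gamma ((k : ℝ) + p + α + 1 / 2) = X at *
  generalize Real.Gamma ((k : ℝ) + α + 1) = A at *
  generalize Real.Gamma ((k : ℝ) + 2 * p + 2 * α + 1) = C at *
  generalize Real.Gamma (α + 1 / 2) = E at *
  generalize poch ((k : ℝ) + 2 * p + 2 * α + 1) k = P at *
  generalize (2 : ℝ) ^ (2 * α) = Y at *
  have hZ : (2 : ℝ) ^ (2 * k) ≠ 0 := by positivity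
  generalize (2 : ℝ) ^ (2 * k) = Z at *
  have d' : P * C * Real.sqrt Real.pi = X * (poch ((k : ℝ) + α + 1) p * A) * (Y * (Z * 4 ^ p)) := by
    rw [d]; field_simp
  generalize poch (α + 1 / 2) p = U at *
  generalize poch ((k : ℝ) + α + 1) (2 * p) = V at *
  field_simp
  linear_combination U * V * d'

/-- closed form of `d_{k,n}` in the ultraspherical case `α = β` (`α > -1`,
`α ≠ -1/2`): a ratio of Gamma functions when `n - k` is even, and `0` when `n - k` is odd. -/
theorem dCoeff_gegenbauer_closed_form
    (α : ℝ) (hα : -1 < α) (hα' : α ≠ -1/2) (n k : ℕ) (hk0 : 0 ≤ k) (hk : k ≤ n) :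
    ((n - k) % 2 = 0 →
      dCoeff α α n k =
        (2 : ℝ) ^ (2 * α) * Real.Gamma ((n : ℝ) + α + 1) *
            Real.Gamma (((k : ℝ) + n + 1) / 2 + α) * Real.Gamma (((n : ℝ) - k + 1) / 2 + α) /
          (Real.sqrt Real.pi * Real.Gamma ((n : ℝ) + 2 * α + 1) *
            Real.Gamma (((k : ℝ) + n) / 2 + 1) * Real.Gamma (((n : ℝ) - k) / 2 + 1) *
            Real.Gamma (α + 1 / 2))) ∧
    ((n - k) % 2 = 1 → dCoeff α α n k = 0) := by
  refine ⟨fun h => ?_, fun h => ?_⟩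
  · obtain ⟨p, rfl⟩ : ∃ p, n = k + 2 * p := ⟨(n - k) / 2, by omega⟩
    rw [even_case α hα hα']
    push_cast
    rw [show ((k : ℝ) + (k + 2 * p) + 1) / 2 + α = k + p + α + 1 / 2 by ring,
      show ((k : ℝ) + 2 * p - k + 1) / 2 + α = α + 1 / 2 + p by ring,
      show ((k : ℝ) + (k + 2 * p)) / 2 + 1 = k + p + 1 by ring,
      show ((k : ℝ) + 2 * p - k) / 2 + 1 = p + 1 by ring]
  · obtain ⟨p, rfl⟩ : ∃ p, n = k + (2 * p + 1) := ⟨(n - k) / 2, by omega⟩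
    rw [dCoeff_eq, wS_odd α hα hα', mul_zero]
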